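/- arXiv:1212.6451 — 2 statements merged into one kernel-verified Lean document; each statement's English description precedes it below -/
import Mathlib

section
/- Let r, s > 0 and suppose F is a Borel probability measure on (0,∞) such that ∫_{(0,∞)} (1 − e^{−qx}) F(dx) = (1 + q^{−s})^{−r} for all q > 0. Then for every x > 0, F((0,x]) = Σ_{k=1}^∞ ((r)_k / k!) · (−1)^{k+1} x^{sk} / Γ(sk + 1), where (r)_k = r(r+1)(r+2)⋯(r+k−1) is the rising factorial and Γ is the Gamma function; in particular this series converges for every x > 0. -/
open MeasureTheory Set Filter Real

noncomputable section

/-!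
For `a > 0` the measure `x ^ (a - 1) / Γ(a) dx` on `(0, ∞)` has Laplace transform `q ^ (-a)` and
distribution function `x ^ a / Γ(a + 1)`. If the Laplace transform of a measure `μ` is
`∑ cᵢ q ^ (-aᵢ)` for large `q`, then moving the terms with `cᵢ < 0` to the other side turns this
into an equality between the Laplace transforms of two positive measures. Uniqueness identifies the
two measures, and evaluating them on `(-∞, x]` inverts the series term by term; convergence for
every `x` comes for free, since a finite Laplace transform bounds the mass of `(-∞, x]`. The theorem
is the case of the binomial series of `1 - (1 + q ^ (-s)) ^ (-r)` in powers of `q ^ (-s)`.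
-/

open ProbabilityTheory Topology
open scoped ENNReal

section Binomial

theorem hasSum_ascPochhammer_div_factorial_mul_pow (r : ℝ) {u : ℝ} (hu : |u| < 1) :
    HasSum (fun n : ℕ => (ascPochhammer ℝ n).eval r / n.factorial * u ^ n) ((1 - u) ^ (-r)) := by
  have hcoeff (n : ℕ) :
      Ring.choose (r + n - 1) n = (ascPochhammer ℝ n).eval r / n.factorial := by
    rw [← Ring.multichoose_eq, eq_div_iff (by positivity), mul_comm, ← nsmul_eq_mul,
      Ring.factorial_nsmul_multichoose_eq_ascPochhammer, Polynomial.ascPochhammer_smeval_eq_eval]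
  have hball : u ∈ Metric.eball (0 : ℝ) 1 := by
    simpa [enorm_eq_nnnorm, ← NNReal.coe_lt_coe] using hu
  have h := (one_div_one_sub_rpow_hasFPowerSeriesOnBall_zero r).hasSum hball
  simpa [FormalMultilinearSeries.ofScalars_apply_eq, hcoeff,
    rpow_neg (sub_nonneg.2 (abs_lt.1 hu).2.le), mul_comm] using h

theorem hasSum_one_sub_one_add_rpow_neg (r : ℝ) {u : ℝ} (hu : |u| < 1) :
    HasSum (fun k : ℕ => (ascPochhammer ℝ (k + 1)).eval r / (k + 1).factorial *
      ((-1) ^ k * u ^ (k + 1))) (1 - (1 + u) ^ (-r)) := by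
  have h := ((hasSum_nat_add_iff' 1).2
    (hasSum_ascPochhammer_div_factorial_mul_pow r (u := -u) (by rwa [abs_neg]))).neg
  simp only [Finset.sum_range_one, ascPochhammer_zero, Polynomial.eval_one, Nat.factorial_zero,
    Nat.cast_one, div_one, pow_zero, mul_one, sub_neg_eq_add, neg_sub] at h
  exact h.congr_fun fun k => by rw [neg_pow]; ring

end Binomial

theorem hasSum_toReal_iff_add_tsum_ofReal_neg {ι : Type*} {f : ι → ℝ} {l : ℝ≥0∞} (hl : l ≠ ∞) :
    HasSum f l.toReal ↔ ∑' i, ENNReal.ofReal (f i) ≠ ∞ ∧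
      l + ∑' i, ENNReal.ofReal (-f i) = ∑' i, ENNReal.ofReal (f i) := by
  have hf_eq : f = fun i => (ENNReal.ofReal (f i)).toReal - (ENNReal.ofReal (-f i)).toReal := by
    ext i
    simp [ENNReal.toReal_ofReal']
  have hdiff (hpos : ∑' i, ENNReal.ofReal (f i) ≠ ∞) (hneg : ∑' i, ENNReal.ofReal (-f i) ≠ ∞) :
      HasSum f ((∑' i, ENNReal.ofReal (f i)).toReal - (∑' i, ENNReal.ofReal (-f i)).toReal) := by
    rw [ENNReal.tsum_toReal_eq fun _ => ENNReal.ofReal_ne_top,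
      ENNReal.tsum_toReal_eq fun _ => ENNReal.ofReal_ne_top]
    conv => arg 1; rw [hf_eq]
    exact (ENNReal.hasSum_toReal hpos).sub (ENNReal.hasSum_toReal hneg)
  constructor
  · intro h
    have hpos := h.summable.tsum_ofReal_ne_top
    have hneg := h.summable.neg.tsum_ofReal_ne_top
    refine ⟨hpos, (ENNReal.toReal_eq_toReal_iff' (ENNReal.add_ne_top.2 ⟨hl, hneg⟩) hpos).1 ?_⟩
    rw [ENNReal.toReal_add hl hneg, h.unique (hdiff hpos hneg), sub_add_cancel]
  · rintro ⟨hpos, h⟩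
    have hneg : ∑' i, ENNReal.ofReal (-f i) ≠ ∞ := ne_top_of_le_ne_top hpos (h ▸ le_add_self)
    convert hdiff hpos hneg using 1
    rw [← h, ENNReal.toReal_add hl hneg, add_sub_cancel_right]

theorem withDensity_injective {α : Type*} [MeasurableSpace α] {f : α → ℝ≥0∞} (hf : Measurable f)
    (hf_ne_zero : ∀ x, f x ≠ 0) (hf_ne_top : ∀ x, f x ≠ ∞) :
    Function.Injective fun μ : Measure α => μ.withDensity f :=
  Function.LeftInverse.injective (g := fun μ => μ.withDensity f⁻¹) fun _ =>
    withDensity_inv_same hf (ae_of_all _ hf_ne_zero) (ae_of_all _ hf_ne_top)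

section Uniqueness

variable {μ ν : Measure ℝ} {t : ℝ}

theorem charFun_withDensity_exp_mul (μ : Measure ℝ) (t y : ℝ) :
    charFun (μ.withDensity fun x => ENNReal.ofReal (exp (t * x))) y =
      complexMGF id μ (t + y * Complex.I) := by
  rw [charFun_apply_real, complexMGF,
    integral_withDensity_eq_integral_toReal_smul (by fun_prop) (ae_of_all _ fun _ => by simp)]
  refine integral_congr_ae (ae_of_all _ fun x => ?_)
  simp only [ENNReal.toReal_ofReal (exp_pos _).le, Complex.real_smul, Complex.ofReal_exp,
    ← Complex.exp_add, id_eq]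
  congr 1
  push_cast
  ring

theorem eqOn_complexMGF_of_mgf_eventuallyEq {Ω Ω' : Type*} [MeasurableSpace Ω]
    [MeasurableSpace Ω'] {P : Measure Ω} {Q : Measure Ω'} {X : Ω → ℝ} {Y : Ω' → ℝ}
    (hX : t ∈ interior (integrableExpSet X P)) (hY : t ∈ interior (integrableExpSet Y Q))
    (h : mgf X P =ᶠ[𝓝 t] mgf Y Q) :
    EqOn (complexMGF X P) (complexMGF Y Q)
      {z | z.re ∈ interior (integrableExpSet X P) ∩ interior (integrableExpSet Y Q)} := by
  have hstrip : Convex ℝ (interior (integrableExpSet X P) ∩ interior (integrableExpSet Y Q)) :=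
    convex_integrableExpSet.interior.inter convex_integrableExpSet.interior
  refine AnalyticOnNhd.eqOn_of_preconnected_of_frequently_eq
    (analyticOnNhd_complexMGF.mono fun z hz => hz.1)
    (analyticOnNhd_complexMGF.mono fun z hz => hz.2)
    (hstrip.linear_preimage Complex.reLm).isPreconnected (z₀ := (t : ℂ)) ⟨hX, hY⟩ ?_
  have hreal : Tendsto ((↑) : ℝ → ℂ) (𝓝[≠] t) (𝓝[≠] (t : ℂ)) :=
    Complex.continuous_ofReal.continuousWithinAt.tendsto_nhdsWithin fun y hy => by simpa using hy
  refine hreal.frequently (Eventually.frequently ?_)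
  filter_upwards [nhdsWithin_le_nhds h] with y hy
  rw [complexMGF_ofReal, complexMGF_ofReal, hy]

theorem measure_eq_of_mgf_eventuallyEq (hμ : t ∈ interior (integrableExpSet id μ))
    (hν : t ∈ interior (integrableExpSet id ν)) (h : mgf id μ =ᶠ[𝓝 t] mgf id ν) : μ = ν := by
  have hfinite {κ : Measure ℝ} (hκ : t ∈ interior (integrableExpSet id κ)) :
      IsFiniteMeasure (κ.withDensity fun x => ENNReal.ofReal (exp (t * x))) :=
    isFiniteMeasure_withDensity_ofReal (interior_subset hκ).2
  have := hfinite hμ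
  have := hfinite hν
  have htilted : (μ.withDensity fun x => ENNReal.ofReal (exp (t * x))) =
      ν.withDensity fun x => ENNReal.ofReal (exp (t * x)) := by
    refine Measure.ext_of_charFun (funext fun y => ?_)
    simpa only [charFun_withDensity_exp_mul] using
      eqOn_complexMGF_of_mgf_eventuallyEq hμ hν h (x := t + y * Complex.I)
        (by simpa using ⟨hμ, hν⟩)
  exact withDensity_injective (by fun_prop) (fun x => by simp [exp_pos]) (fun x => by simp) htilted

end Uniqueness

section LaplaceTransform

variable {μ ν : Measure ℝ} {q : ℝ}

/-- The bilateral Laplace transform `q ↦ ∫ exp (-q x) dμ(x)` of a positive measure on the line. It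
takes values in `ℝ≥0∞`, so that divergence is visible and no integrability is needed to add. -/
def laplaceTransform (μ : Measure ℝ) (q : ℝ) : ℝ≥0∞ :=
  ∫⁻ x, ENNReal.ofReal (exp (-(q * x))) ∂μ

theorem laplaceTransform_ne_top_iff :
    laplaceTransform μ q ≠ ∞ ↔ Integrable (fun x => exp (-(q * x))) μ := by
  rw [← lintegral_ofReal_ne_top_iff_integrable (by fun_prop)
    (ae_of_all _ fun x => (exp_pos _).le), laplaceTransform]

theorem toReal_laplaceTransform : (laplaceTransform μ q).toReal = ∫ x, exp (-(q * x)) ∂μ :=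
  (integral_eq_lintegral_of_nonneg_ae (ae_of_all _ fun x => (exp_pos _).le) (by fun_prop)).symm

theorem laplaceTransform_add :
    laplaceTransform (μ + ν) q = laplaceTransform μ q + laplaceTransform ν q :=
  lintegral_add_measure _ _ _

theorem laplaceTransform_ne_top_of_ae_nonneg [IsFiniteMeasure μ] (hμ : ∀ᵐ x ∂μ, 0 ≤ x)
    (hq : 0 ≤ q) : laplaceTransform μ q ≠ ∞ := by
  refine laplaceTransform_ne_top_iff.2 ((integrable_const (1 : ℝ)).mono' (by fun_prop) ?_)
  filter_upwards [hμ] with x hx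
  rw [norm_of_nonneg (exp_pos _).le, exp_le_one_iff, neg_nonpos]
  exact mul_nonneg hq hx

theorem integral_one_sub_exp_neg_mul [IsFiniteMeasure μ] (hμ : laplaceTransform μ q ≠ ∞) :
    ∫ x, (1 - exp (-(q * x))) ∂μ = μ.real univ - (laplaceTransform μ q).toReal := by
  rw [integral_sub (integrable_const _) (laplaceTransform_ne_top_iff.1 hμ), integral_const,
    smul_eq_mul, mul_one, toReal_laplaceTransform]

theorem measure_Iic_ne_top_of_laplaceTransform_ne_top (hq : 0 ≤ q)
    (hμ : laplaceTransform μ q ≠ ∞) (x : ℝ) : μ (Iic x) ≠ ∞ := by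
  set ε : ℝ≥0∞ := ENNReal.ofReal (exp (-(q * x)))
  have hmono : μ (Iic x) ≤ μ {y | ε ≤ ENNReal.ofReal (exp (-(q * y)))} :=
    measure_mono fun y (hy : y ≤ x) => ENNReal.ofReal_le_ofReal (exp_le_exp.2 (by gcongr))
  have hmarkov := meas_ge_le_lintegral_div (μ := μ) (ε := ε)
    (f := fun y => ENNReal.ofReal (exp (-(q * y)))) (by fun_prop) (by simp [ε, exp_pos])
    ENNReal.ofReal_ne_top
  exact ne_top_of_le_ne_top (ENNReal.div_ne_top hμ (by simp [ε, exp_pos])) (hmono.trans hmarkov)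

theorem eventually_mem_interior_integrableExpSet
    (hμ : ∀ᶠ q in atTop, laplaceTransform μ q ≠ ∞) :
    ∀ᶠ t in atBot, t ∈ interior (integrableExpSet id μ) := by
  obtain ⟨q₀, hq₀⟩ := eventually_atTop.1 hμ
  filter_upwards [Iio_mem_atBot (-q₀)] with t ht
  refine mem_interior.2 ⟨Iio (-q₀), fun u (hu : u < -q₀) => ?_, isOpen_Iio, ht⟩
  simpa [integrableExpSet] using laplaceTransform_ne_top_iff.1 (hq₀ (-u) (by linarith))

theorem measure_eq_of_laplaceTransform_eventuallyEq
    (hμ : ∀ᶠ q in atTop, laplaceTransform μ q ≠ ∞)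
    (h : laplaceTransform μ =ᶠ[atTop] laplaceTransform ν) : μ = ν := by
  have hν : ∀ᶠ q in atTop, laplaceTransform ν q ≠ ∞ := by
    filter_upwards [hμ, h] with q hq heq
    rwa [← heq]
  obtain ⟨q₀, hq₀⟩ := eventually_atTop.1 h
  obtain ⟨t, ⟨htμ, htν⟩, ht⟩ :=
    (((eventually_mem_interior_integrableExpSet hμ).and
      (eventually_mem_interior_integrableExpSet hν)).and
      (Iio_mem_atBot (-q₀))).exists
  refine measure_eq_of_mgf_eventuallyEq htμ htν ?_
  filter_upwards [Iio_mem_nhds ht] with u (hu : u < -q₀)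
  simpa [mgf, toReal_laplaceTransform] using congrArg ENNReal.toReal (hq₀ (-u) (by linarith))

end LaplaceTransform

section RieszMeasure

variable {a q x : ℝ}

/-- The Riesz measure of order `a`, with density `x ^ (a - 1) / Γ(a)` on `(0, ∞)` (the kernel of the
Riemann–Liouville fractional integral). It is meant for `a > 0`, where its Laplace transform is
`q ^ (-a)`. -/
def rieszMeasure (a : ℝ) : Measure ℝ :=
  (volume.restrict (Ioi 0)).withDensity fun x => ENNReal.ofReal (x ^ (a - 1) / Gamma a)

theorem laplaceTransform_rieszMeasure (ha : 0 < a) (hq : 0 < q) :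
    laplaceTransform (rieszMeasure a) q = ENNReal.ofReal (q ^ (-a)) := by
  have hΓ : 0 < Gamma a := Gamma_pos_of_pos ha
  have hval : ∫ x in Ioi 0, x ^ (a - 1) * exp (-(q * x)) = q ^ (-a) * Gamma a := by
    rw [integral_rpow_mul_exp_neg_mul_Ioi ha hq, one_div, inv_rpow hq.le, rpow_neg hq.le]
  have hint : IntegrableOn (fun x => x ^ (a - 1) * exp (-(q * x))) (Ioi 0) :=
    .of_integral_ne_zero (by rw [hval]; positivity)
  rw [laplaceTransform, rieszMeasure,
    lintegral_withDensity_eq_lintegral_mul _ (by fun_prop) (by fun_prop)]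
  calc _ = ∫⁻ x in Ioi 0, ENNReal.ofReal (x ^ (a - 1) * exp (-(q * x)) / Gamma a) := by
        refine lintegral_congr fun x => ?_
        rw [Pi.mul_apply, ← ENNReal.ofReal_mul' (exp_pos _).le, div_mul_eq_mul_div]
    _ = ENNReal.ofReal (∫ x in Ioi 0, x ^ (a - 1) * exp (-(q * x)) / Gamma a) := by
        refine (ofReal_integral_eq_lintegral_ofReal (hint.div_const _) ?_).symm
        filter_upwards [ae_restrict_mem measurableSet_Ioi] with x (hx : 0 < x)
        simp only [Pi.zero_apply]
        positivity
    _ = ENNReal.ofReal (q ^ (-a)) := by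
        rw [integral_div, hval, mul_div_cancel_right₀ _ hΓ.ne']

theorem rieszMeasure_Iic (ha : 0 < a) (hx : 0 ≤ x) :
    rieszMeasure a (Iic x) = ENNReal.ofReal (x ^ a / Gamma (a + 1)) := by
  have hint : IntegrableOn (fun y => y ^ (a - 1)) (Ioc 0 x) :=
    (intervalIntegrable_iff_integrableOn_Ioc_of_le hx).1
      (intervalIntegral.intervalIntegrable_rpow' (by linarith))
  have hval : ∫ y in Ioc 0 x, y ^ (a - 1) = x ^ a / a := by
    rw [← intervalIntegral.integral_of_le hx, integral_rpow (.inl (by linarith)),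
      sub_add_cancel, zero_rpow ha.ne', sub_zero]
  rw [rieszMeasure, withDensity_apply _ measurableSet_Iic,
    Measure.restrict_restrict measurableSet_Iic, inter_comm, Ioi_inter_Iic,
    ← ofReal_integral_eq_lintegral_ofReal (hint.div_const _), integral_div, hval,
    Gamma_add_one ha.ne', div_div]
  filter_upwards [ae_restrict_mem measurableSet_Ioc] with y hy
  exact div_nonneg (rpow_nonneg hy.1.le _) (Gamma_nonneg_of_nonneg ha.le)

end RieszMeasure

section TermwiseInversion

variable {ι : Type*} {c a : ι → ℝ} {μ : Measure ℝ} {q x : ℝ}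

/-- The mixture of Riesz measures of orders `a i` with weights the positive parts of the `c i`
(`ENNReal.ofReal` truncates at `0`). A signed combination is encoded by the pair of mixtures with
weights `c` and `-c`. -/
def rieszMixture (c a : ι → ℝ) : Measure ℝ :=
  Measure.sum fun i => ENNReal.ofReal (c i) • rieszMeasure (a i)

theorem laplaceTransform_rieszMixture (ha : ∀ i, 0 < a i) (hq : 0 < q) :
    laplaceTransform (rieszMixture c a) q = ∑' i, ENNReal.ofReal (c i * q ^ (-a i)) := by
  rw [laplaceTransform, rieszMixture, lintegral_sum_measure]
  refine tsum_congr fun i => ?_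
  rw [lintegral_smul_measure, ← laplaceTransform, laplaceTransform_rieszMeasure (ha i) hq,
    smul_eq_mul, ENNReal.ofReal_mul' (by positivity)]

theorem rieszMixture_Iic (ha : ∀ i, 0 < a i) (hx : 0 ≤ x) :
    rieszMixture c a (Iic x) = ∑' i, ENNReal.ofReal (c i * (x ^ a i / Gamma (a i + 1))) := by
  rw [rieszMixture, Measure.sum_apply _ measurableSet_Iic]
  refine tsum_congr fun i => ?_
  have hΓ : 0 ≤ Gamma (a i + 1) := Gamma_nonneg_of_nonneg (by linarith [ha i])
  rw [Measure.smul_apply, rieszMeasure_Iic (ha i) hx, smul_eq_mul,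
    ENNReal.ofReal_mul' (by positivity)]

theorem add_rieszMixture_neg_eq_rieszMixture (ha : ∀ i, 0 < a i)
    (hfin : ∀ᶠ q in atTop, laplaceTransform μ q ≠ ∞)
    (hsum : ∀ᶠ q in atTop,
      HasSum (fun i => c i * q ^ (-a i)) (laplaceTransform μ q).toReal) :
    μ + rieszMixture (-c) a = rieszMixture c a := by
  have hparts : ∀ᶠ q in atTop, laplaceTransform (rieszMixture c a) q ≠ ∞ ∧
      laplaceTransform (μ + rieszMixture (-c) a) q = laplaceTransform (rieszMixture c a) q := by
    filter_upwards [hfin, hsum, eventually_gt_atTop 0] with q hq hs hq0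
    have h := (hasSum_toReal_iff_add_tsum_ofReal_neg hq).1 hs
    rw [laplaceTransform_add, laplaceTransform_rieszMixture ha hq0,
      laplaceTransform_rieszMixture ha hq0]
    simpa only [Pi.neg_apply, neg_mul] using h
  exact (measure_eq_of_laplaceTransform_eventuallyEq (hparts.mono fun q h => h.1)
    (hparts.mono fun q h => h.2.symm)).symm

theorem hasSum_measureReal_Iic_of_hasSum_laplaceTransform (ha : ∀ i, 0 < a i)
    (hfin : ∀ᶠ q in atTop, laplaceTransform μ q ≠ ∞)
    (hsum : ∀ᶠ q in atTop,
      HasSum (fun i => c i * q ^ (-a i)) (laplaceTransform μ q).toReal) (hx : 0 ≤ x) :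
    HasSum (fun i => c i * (x ^ a i / Gamma (a i + 1))) (μ.real (Iic x)) := by
  obtain ⟨q, ⟨hqμ, hqc⟩, hq⟩ := ((hfin.and hsum).and (eventually_gt_atTop 0)).exists
  have hmix : laplaceTransform (rieszMixture c a) q ≠ ∞ := by
    rw [laplaceTransform_rieszMixture ha hq]
    exact hqc.summable.tsum_ofReal_ne_top
  refine (hasSum_toReal_iff_add_tsum_ofReal_neg
    (measure_Iic_ne_top_of_laplaceTransform_ne_top hq.le hqμ x)).2 ⟨?_, ?_⟩
  · rw [← rieszMixture_Iic ha hx]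
    exact measure_Iic_ne_top_of_laplaceTransform_ne_top hq.le hmix x
  · have h := congrArg (· (Iic x)) (add_rieszMixture_neg_eq_rieszMixture ha hfin hsum)
    simpa only [Measure.add_apply, rieszMixture_Iic ha hx, Pi.neg_apply, neg_mul] using h

end TermwiseInversion

theorem generalized_mittag_leffler_series_general (r : ℝ) {s : ℝ} (hs : 0 < s) {F : Measure ℝ}
    (hF : F (Ioi 0) = 1)
    (hlap : ∀ᶠ q in atTop,
      ∫ x in Ioi (0 : ℝ), (1 - exp (-(q * x))) ∂F = (1 + q ^ (-s)) ^ (-r))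
    {x : ℝ} (hx : 0 ≤ x) :
    HasSum (fun k : ℕ => (ascPochhammer ℝ (k + 1)).eval r / (k + 1).factorial *
      ((-1) ^ k * x ^ (s * (k + 1)) / Gamma (s * (k + 1) + 1))) (F.real (Ioc 0 x)) := by
  have : IsProbabilityMeasure (F.restrict (Ioi 0)) := ⟨by rwa [Measure.restrict_apply_univ]⟩
  have hnonneg : ∀ᵐ y ∂F.restrict (Ioi 0), 0 ≤ y :=
    (ae_restrict_mem measurableSet_Ioi).mono fun y hy => le_of_lt hy
  have hfin : ∀ᶠ q in atTop, laplaceTransform (F.restrict (Ioi 0)) q ≠ ∞ :=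
    (eventually_ge_atTop 0).mono fun q => laplaceTransform_ne_top_of_ae_nonneg hnonneg
  set c : ℕ → ℝ := fun k => (ascPochhammer ℝ (k + 1)).eval r / (k + 1).factorial * (-1) ^ k
  have hsum : ∀ᶠ q in atTop, HasSum (fun k : ℕ => c k * q ^ (-(s * (k + 1))))
      (laplaceTransform (F.restrict (Ioi 0)) q).toReal := by
    filter_upwards [hfin, hlap, eventually_gt_atTop 1] with q hq hL hq1
    have hu : |q ^ (-s)| < 1 := by
      rw [abs_of_nonneg (by positivity)]
      exact rpow_lt_one_of_one_lt_of_neg hq1 (neg_neg_of_pos hs)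
    rw [integral_one_sub_exp_neg_mul hq, probReal_univ] at hL
    rw [← sub_sub_cancel 1 (laplaceTransform _ q).toReal, hL]
    refine (hasSum_one_sub_one_add_rpow_neg r hu).congr_fun fun k => ?_
    rw [← neg_mul, rpow_mul (by positivity), ← Nat.cast_add_one, rpow_natCast, mul_assoc]
  have h := hasSum_measureReal_Iic_of_hasSum_laplaceTransform
    (fun k : ℕ => by positivity) hfin hsum hx
  rw [measureReal_restrict_apply measurableSet_Iic, inter_comm, Ioi_inter_Iic] at h
  exact h.congr_fun fun k => by rw [mul_assoc, mul_div_assoc]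

/-- a probability measure on `(0,∞)` whose Laplace transform of
`1 - e^{-qx}` equals `(1 + q^{-s})^{-r}` has the generalized Mittag-Leffler
distribution function
`F((0,x]) = Σ_{k≥1} ((r)_k/k!) (-1)^{k+1} x^{sk} / Γ(sk+1)`, the series
converging for every `x > 0`. -/
theorem generalized_mittag_leffler_series
    (r s : ℝ) (hr : 0 < r) (hs : 0 < s)
    (F : Measure ℝ) (hFp : IsProbabilityMeasure F) (hFc : F (Iic 0) = 0)
    (hlap : ∀ q : ℝ, 0 < q →
      ∫ x in Ioi (0:ℝ), (1 - exp (-(q * x))) ∂F = (1 + q ^ (-s)) ^ (-r)) :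
    ∀ x : ℝ, 0 < x →
      Summable (fun k : ℕ =>
        (Polynomial.eval r (ascPochhammer ℝ (k + 1)) / ((k + 1).factorial : ℝ)) *
          ((-1 : ℝ) ^ k * x ^ (s * (k + 1)) / Real.Gamma (s * (k + 1) + 1))) ∧
      (F (Ioc 0 x)).toReal = ∑' k : ℕ,
        (Polynomial.eval r (ascPochhammer ℝ (k + 1)) / ((k + 1).factorial : ℝ)) *
          ((-1 : ℝ) ^ k * x ^ (s * (k + 1)) / Real.Gamma (s * (k + 1) + 1)) := by
  intro x hx
  have hF : F (Ioi 0) = 1 := by rwa [← compl_Iic, prob_compl_eq_one_iff measurableSet_Iic]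
  have h := generalized_mittag_leffler_series_general r hs hF ((eventually_gt_atTop 0).mono hlap)
    hx.le
  exact ⟨h.summable, h.tsum_eq.symm⟩
end
end

section
/- Let Ψ be a critical branching mechanism which is regularly varying at 0 with index γ ∈ (1,2]. Let (ν_t)_{t>0} be a family of nonzero finite Borel measures on (0,∞) such that φ(t,q) = ∫_{(0,∞)} (1 − e^{−qx}) ν_t(dx) satisfies ∂_t φ(t,q) = −Ψ(φ(t,q)) for all t > 0 and all q ∈ (0,∞], where φ(t,∞) := ν_t((0,∞)). Suppose there exist functions α, λ : (0,∞) → (0,∞) and a nonzero finite Borel measure ν̂ on (0,∞) such that for every bounded continuous f : (0,∞) → ℝ, α(t) ∫_{(0,∞)} f(λ(t) x) ν_t(dx) → ∫_{(0,∞)} f dν̂ as t → ∞. Then there exist ρ ∈ (0,1] and c > 0 such that for all q > 0, ∫_{(0,∞)} (1 − e^{−qx}) ν̂(dx) = ν̂((0,∞)) · (1 + c·q^{−ρ(γ−1)})^{−1/(γ−1)}. -/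
open MeasureTheory Set Filter

noncomputable section

/-!
The time `G(u) = ∫_u^1 dv / Ψ(v)` needed to descend from `1` to `u` along `y' = -Ψ(y)` linearises
the equation: `G(φ(t,q)) = t + C(q)` with `C` nonincreasing. The total mass `M` solves the same
equation and tends to `0`, so regular variation gives
`d/dt G(x M(t)) = x Ψ(M(t)) / Ψ(x M(t)) → x^{1-γ}` and hence `G(x M(t)) / t → x^{1-γ}`. The scaling
limit therefore reads `C(q λ(t)) / t → R(q)`, where `R = X^{1-γ} - 1` and `X` is the Laplace
exponent of `ν̂` divided by its mass. A scaling limit of a monotone function is a power,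
`R(q) = c q^{-κ}` with `κ > 0`, and concavity of `X`, through `X(q) ≥ q X(1)` near `0`, gives
`κ ≤ γ - 1`. Take `ρ = κ / (γ - 1)`.
-/

open scoped Topology

section MonotoneLimits

variable {ι α β : Type*} [LinearOrder α] [TopologicalSpace α] [OrderTopology α]
  [DenselyOrdered α] [NoMinOrder α] [NoMaxOrder α]
  [LinearOrder β] [TopologicalSpace β] [OrderTopology β]
  {l : Filter ι} {F : ι → α → β} {g : α → β} {s : Set α} {x : α} {X : ι → α}

theorem tendsto_apply_of_antitoneOn (hs : s ∈ 𝓝 x) (hF : ∀ᶠ i in l, AntitoneOn (F i) s)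
    (hlim : ∀ y ∈ s, Tendsto (fun i => F i y) l (𝓝 (g y))) (hg : ContinuousAt g x)
    (hX : Tendsto X l (𝓝 x)) : Tendsto (fun i => F i (X i)) l (𝓝 (g x)) := by
  have hXs : ∀ᶠ i in l, X i ∈ s := hX.eventually_mem hs
  refine tendsto_order.2 ⟨fun b hb => ?_, fun b hb => ?_⟩
  · obtain ⟨y, ⟨hyb, hys⟩, hxy⟩ := (((hg.eventually_const_lt hb).and hs).filter_mono
      nhdsWithin_le_nhds |>.and (self_mem_nhdsWithin (s := Ioi x))).exists
    filter_upwards [hF, hXs, hX.eventually_lt_const hxy, (hlim y hys).eventually_const_lt hyb]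
      with i hFi hXi hlt hb using hb.trans_le (hFi hXi hys hlt.le)
  · obtain ⟨y, ⟨hyb, hys⟩, hxy⟩ := (((hg.eventually_lt_const hb).and hs).filter_mono
      nhdsWithin_le_nhds |>.and (self_mem_nhdsWithin (s := Iio x))).exists
    filter_upwards [hF, hXs, hX.eventually_const_lt hxy, (hlim y hys).eventually_lt_const hyb]
      with i hFi hXi hlt hb using (hFi hys hXi hlt.le).trans_lt hb

theorem tendsto_of_tendsto_apply_of_antitoneOn (hs : s ∈ 𝓝 x)
    (hF : ∀ᶠ i in l, AntitoneOn (F i) s) (hlim : ∀ y ∈ s, Tendsto (fun i => F i y) l (𝓝 (g y)))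
    (hg : StrictAntiOn g s) (hXs : ∀ᶠ i in l, X i ∈ s)
    (hFX : Tendsto (fun i => F i (X i)) l (𝓝 (g x))) : Tendsto X l (𝓝 x) := by
  have hxs : x ∈ s := mem_of_mem_nhds hs
  refine tendsto_order.2 ⟨fun b hb => ?_, fun b hb => ?_⟩
  · obtain ⟨y, ⟨hby, hys⟩, hyx⟩ := (((lt_mem_nhds hb).and hs).filter_mono
      nhdsWithin_le_nhds |>.and (self_mem_nhdsWithin (s := Iio x))).exists
    filter_upwards [hF, hXs, hFX.eventually_lt (hlim y hys) (hg hys hxs hyx)] with i hFi hXi hlt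
    exact hby.trans (lt_of_not_ge fun hle => (hFi hXi hys hle).not_gt hlt)
  · obtain ⟨y, ⟨hby, hys⟩, hyx⟩ := (((gt_mem_nhds hb).and hs).filter_mono
      nhdsWithin_le_nhds |>.and (self_mem_nhdsWithin (s := Ioi x))).exists
    filter_upwards [hF, hXs, (hlim y hys).eventually_lt hFX (hg hxs hys hyx)] with i hFi hXi hlt
    exact (lt_of_not_ge fun hle => (hFi hys hXi hle).not_gt hlt).trans hby

end MonotoneLimits

section PowerLaws

variable {C lam R : ℝ → ℝ}

-- The time change `t ↦ k t` with `k = R p / R 1` turns the limit `R 1` into `R p`, which forces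
-- `lam (k t) / lam t → p`.
theorem map_mul_of_tendsto_scaling (hC : AntitoneOn C (Ioi 0)) (hlam : ∀ᶠ t in atTop, 0 < lam t)
    (hRpos : ∀ q, 0 < q → 0 < R q) (hRcont : ContinuousOn R (Ioi 0))
    (hRanti : StrictAntiOn R (Ioi 0))
    (hlim : ∀ q, 0 < q → Tendsto (fun t => C (q * lam t) / t) atTop (𝓝 (R q)))
    {p q : ℝ} (hp : 0 < p) (hq : 0 < q) : R (p * q) * R 1 = R p * R q := by
  have hR1 : 0 < R 1 := hRpos 1 one_pos
  set k := R p / R 1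
  have hk : 0 < k := div_pos (hRpos p hp) hR1
  have hkt : Tendsto (fun t : ℝ => k * t) atTop atTop := tendsto_id.const_mul_atTop hk
  have hlim_k (x : ℝ) (hx : 0 < x) :
      Tendsto (fun t => C (x * lam (k * t)) / t) atTop (𝓝 (k * R x)) := by
    refine (((hlim x hx).comp hkt).const_mul k).congr fun t => ?_
    simp only [Function.comp_apply]
    field_simp
  have hanti : ∀ᶠ t in atTop, AntitoneOn (fun x => C (x * lam t) / t) (Ioi 0) := by
    filter_upwards [hlam, eventually_gt_atTop 0] with t hl ht x hx y hy hxy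
    exact div_le_div_of_nonneg_right
      (hC (mul_pos hx hl) (mul_pos hy hl) (mul_le_mul_of_nonneg_right hxy hl.le)) ht.le
  have hratio : Tendsto (fun t => lam (k * t) / lam t) atTop (𝓝 p) := by
    refine tendsto_of_tendsto_apply_of_antitoneOn (Ioi_mem_nhds hp) hanti hlim hRanti ?_ ?_
    · filter_upwards [hlam, hkt.eventually hlam] with t hl hl' using div_pos hl' hl
    · have hkR : k * R 1 = R p := div_mul_cancel₀ _ hR1.ne'
      refine hkR ▸ (hlim_k 1 one_pos).congr' ?_
      filter_upwards [hlam] with t hl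
      rw [one_mul, div_mul_cancel₀ _ hl.ne']
  have hmoving : Tendsto (fun t => C (q * lam (k * t)) / t) atTop (𝓝 (R (p * q))) := by
    have hpq : Ioi (0 : ℝ) ∈ 𝓝 (p * q) := Ioi_mem_nhds (mul_pos hp hq)
    refine (tendsto_apply_of_antitoneOn hpq hanti hlim (hRcont.continuousAt hpq)
      (hratio.mul_const q)).congr' ?_
    filter_upwards [hlam] with t hl
    rw [mul_right_comm, div_mul_cancel₀ _ hl.ne', mul_comm]
  rw [tendsto_nhds_unique hmoving (hlim_k q hq), mul_right_comm, div_mul_cancel₀ _ hR1.ne']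

theorem exists_eq_rpow_of_map_mul {f : ℝ → ℝ} (hpos : ∀ x, 0 < x → 0 < f x)
    (hcont : ContinuousOn f (Ioi 0)) (hmul : ∀ x y, 0 < x → 0 < y → f (x * y) = f x * f y) :
    ∃ κ : ℝ, ∀ x, 0 < x → f x = x ^ κ := by
  have hpos_exp (x : ℝ) : 0 < f (Real.exp x) := hpos _ (Real.exp_pos x)
  let g : ℝ →+ ℝ := AddMonoidHom.mk' (fun x => Real.log (f (Real.exp x))) fun x y => by
    rw [Real.exp_add, hmul _ _ (Real.exp_pos x) (Real.exp_pos y),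
      Real.log_mul (hpos_exp x).ne' (hpos_exp y).ne']
  have hg : Continuous g :=
    (hcont.comp_continuous Real.continuous_exp Real.exp_pos).log fun x => (hpos_exp x).ne'
  refine ⟨g 1, fun x hx => ?_⟩
  have hlinear : g (Real.log x) = Real.log x * g 1 := by
    simpa using map_real_smul g hg (Real.log x) 1
  have hg_log : g (Real.log x) = Real.log (f x) := congrArg (Real.log ∘ f) (Real.exp_log hx)
  rw [Real.rpow_def_of_pos hx, ← hlinear, hg_log, Real.exp_log (hpos x hx)]

theorem exists_eq_mul_rpow_neg_of_tendsto_scaling (hC : AntitoneOn C (Ioi 0))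
    (hlam : ∀ᶠ t in atTop, 0 < lam t) (hRpos : ∀ q, 0 < q → 0 < R q)
    (hRcont : ContinuousOn R (Ioi 0)) (hRanti : StrictAntiOn R (Ioi 0))
    (hlim : ∀ q, 0 < q → Tendsto (fun t => C (q * lam t) / t) atTop (𝓝 (R q))) :
    ∃ κ : ℝ, 0 < κ ∧ ∀ q, 0 < q → R q = R 1 * q ^ (-κ) := by
  have hR1 : 0 < R 1 := hRpos 1 one_pos
  obtain ⟨κ, hκ⟩ := exists_eq_rpow_of_map_mul (f := fun q => R q / R 1)
    (fun q hq => div_pos (hRpos q hq) hR1) (hRcont.div_const _) fun p q hp hq => by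
      have := map_mul_of_tendsto_scaling hC hlam hRpos hRcont hRanti hlim hp hq
      field_simp
      exact this
  have hκ_neg : κ < 0 := by
    have h21 : R 2 / R 1 < 1 := (div_lt_one hR1).2 <|
      hRanti (mem_Ioi.2 one_pos) (mem_Ioi.2 two_pos) one_lt_two
    rwa [hκ 2 two_pos, Real.rpow_lt_one_iff_of_pos two_pos, or_iff_left (by norm_num),
      and_iff_right one_lt_two] at h21
  refine ⟨-κ, neg_pos.2 hκ_neg, fun q hq => ?_⟩
  rw [neg_neg, ← hκ q hq, mul_div_cancel₀ _ hR1.ne']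

theorem le_of_eventually_mul_rpow_le {a b c K : ℝ} (hc : 0 < c)
    (h : ∀ᶠ q in 𝓝[>] (0 : ℝ), c * q ^ a ≤ K * q ^ b) : b ≤ a := by
  by_contra! hab
  have hlim : Tendsto (fun q : ℝ => K * q ^ (b - a)) (𝓝[>] 0) (𝓝 0) := by
    have hcont : ContinuousAt (fun q : ℝ => K * q ^ (b - a)) 0 :=
      (Real.continuousAt_rpow_const 0 _ (Or.inr (sub_pos.2 hab).le)).const_mul K
    simpa [Real.zero_rpow (sub_pos.2 hab).ne'] using hcont.tendsto.mono_left nhdsWithin_le_nhds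
  refine hc.not_ge (ge_of_tendsto hlim ?_)
  filter_upwards [h, self_mem_nhdsWithin] with q hq hq0
  rwa [Real.rpow_sub hq0, ← mul_div_assoc, le_div_iff₀ (Real.rpow_pos_of_pos hq0 a)]

end PowerLaws

section ConcaveProfile

variable {X : ℝ → ℝ} {δ : ℝ}

theorem rpow_neg_sub_one_scaling_exponent_le {κ c : ℝ} (hδ : 0 ≤ δ) (hc : 0 < c)
    (hX : ConcaveOn ℝ (Ici 0) X) (hX0 : X 0 = 0) (hX1 : 0 < X 1)
    (h : ∀ q, 0 < q → X q ^ (-δ) - 1 = c * q ^ (-κ)) : κ ≤ δ := by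
  refine neg_le_neg_iff.1 (le_of_eventually_mul_rpow_le (K := X 1 ^ (-δ)) hc ?_)
  filter_upwards [Ioc_mem_nhdsGT one_pos] with q hq
  have hchord : q * X 1 ≤ X q := by
    simpa [hX0] using hX.2 (mem_Ici.2 zero_le_one) self_mem_Ici hq.1.le (sub_nonneg.2 hq.2)
      (add_sub_cancel q 1)
  calc c * q ^ (-κ) ≤ X q ^ (-δ) := by linarith [h q hq.1]
    _ ≤ (q * X 1) ^ (-δ) :=
      Real.rpow_le_rpow_of_nonpos (mul_pos hq.1 hX1) hchord (neg_nonpos.2 hδ)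
    _ = X 1 ^ (-δ) * q ^ (-δ) := by rw [Real.mul_rpow hq.1.le hX1.le, mul_comm]

theorem exists_eq_one_add_mul_rpow_of_tendsto_scaling {C lam : ℝ → ℝ} (hδ : 0 < δ)
    (hX : ConcaveOn ℝ (Ici 0) X) (hX0 : X 0 = 0) (hXmono : StrictMonoOn X (Ici 0))
    (hX_lt_one : ∀ q, 0 < q → X q < 1) (hC : AntitoneOn C (Ioi 0))
    (hlam : ∀ᶠ t in atTop, 0 < lam t)
    (hlim : ∀ q, 0 < q → Tendsto (fun t => C (q * lam t) / t) atTop (𝓝 (X q ^ (-δ) - 1))) :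
    ∃ ρ : ℝ, 0 < ρ ∧ ρ ≤ 1 ∧ ∃ c : ℝ, 0 < c ∧
      ∀ q, 0 < q → X q = (1 + c * q ^ (-(ρ * δ))) ^ (-(1 / δ)) := by
  have hXpos (q : ℝ) (hq : 0 < q) : 0 < X q := hX0 ▸ hXmono self_mem_Ici hq.le hq
  have hXcont : ContinuousOn X (Ioi 0) := by simpa using hX.continuousOn_interior
  set R : ℝ → ℝ := fun q => X q ^ (-δ) - 1
  have hRpos (q : ℝ) (hq : 0 < q) : 0 < R q := sub_pos.2 <|
    Real.one_lt_rpow_of_pos_of_lt_one_of_neg (hXpos q hq) (hX_lt_one q hq) (neg_neg_of_pos hδ)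
  have hRcont : ContinuousOn R (Ioi 0) :=
    (hXcont.rpow_const fun q hq => Or.inl (hXpos q hq).ne').sub continuousOn_const
  have hRanti : StrictAntiOn R (Ioi 0) := fun p hp q hq hpq => sub_lt_sub_right
    (Real.rpow_lt_rpow_of_neg (hXpos p hp)
      (hXmono (Ioi_subset_Ici_self hp) (Ioi_subset_Ici_self hq) hpq) (neg_neg_of_pos hδ)) 1
  obtain ⟨κ, hκ, hRpow⟩ :=
    exists_eq_mul_rpow_neg_of_tendsto_scaling hC hlam hRpos hRcont hRanti hlim
  have hκδ : κ ≤ δ := rpow_neg_sub_one_scaling_exponent_le hδ.le (hRpos 1 one_pos) hX hX0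
    (hXpos 1 one_pos) hRpow
  refine ⟨κ / δ, div_pos hκ hδ, (div_le_one hδ).2 hκδ, R 1, hRpos 1 one_pos, fun q hq => ?_⟩
  rw [div_mul_cancel₀ _ hδ.ne', ← hRpow q hq, add_sub_cancel, ← Real.rpow_mul (hXpos q hq).le,
    neg_mul_neg, mul_one_div_cancel hδ.ne', Real.rpow_one]

end ConcaveProfile

section Integrals

variable {α : Type*} [MeasurableSpace α] {μ : Measure α}

theorem convexOn_integral {E : Type*} [AddCommGroup E] [Module ℝ E] {s : Set E}
    {f : E → α → ℝ} (hs : Convex ℝ s) (hf : ∀ᵐ x ∂μ, ConvexOn ℝ s fun u => f u x)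
    (hint : ∀ u ∈ s, Integrable (f u) μ) : ConvexOn ℝ s fun u => ∫ x, f u x ∂μ := by
  refine ⟨hs, fun u hu v hv a b ha hb hab => ?_⟩
  have hu_int := (hint u hu).const_mul a
  have hv_int := (hint v hv).const_mul b
  simp only [smul_eq_mul]
  rw [← integral_const_mul, ← integral_const_mul, ← integral_add hu_int hv_int]
  refine integral_mono_ae (hint _ (hs hu hv ha hb hab)) (hu_int.add hv_int) ?_
  filter_upwards [hf] with x hx using hx.2 hu hv ha hb hab

theorem setIntegral_lt_setIntegral {s : Set α} {f g : α → ℝ} (hs : MeasurableSet s)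
    (hμs : μ s ≠ 0) (hf : IntegrableOn f s μ) (hg : IntegrableOn g s μ)
    (hfg : ∀ x ∈ s, f x < g x) : ∫ x in s, f x ∂μ < ∫ x in s, g x ∂μ := by
  rw [← sub_pos, ← integral_sub' hg hf, setIntegral_pos_iff_support_of_nonneg_ae _ (hg.sub hf)]
  · have hsupp : s ⊆ Function.support (g - f) := fun x hx => (sub_pos.2 (hfg x hx)).ne'
    rw [inter_eq_self_of_subset_right hsupp]
    exact pos_iff_ne_zero.2 hμs
  · filter_upwards [ae_restrict_mem hs] with x hx using sub_nonneg.2 (hfg x hx).le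

end Integrals

theorem convexOn_exp_neg_mul (x : ℝ) : ConvexOn ℝ univ fun u : ℝ => Real.exp (-(u * x)) := by
  simpa [Function.comp_def] using convexOn_exp.comp_linearMap (-LinearMap.mulRight ℝ x)

theorem monotoneOn_Ici_of_convexOn_of_isMinOn {f : ℝ → ℝ} {a : ℝ} (hf : ConvexOn ℝ (Ici a) f)
    (hmin : IsMinOn f (Ici a) a) : MonotoneOn f (Ici a) := by
  intro u hu v hv huv
  rcases (mem_Ici.1 hu).eq_or_lt with rfl | hau
  · exact hmin hv
  rcases huv.eq_or_lt with rfl | huv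
  · exact le_rfl
  · exact hf.le_right_of_left_le self_mem_Ici hv
      (by rw [openSegment_eq_Ioo (hau.trans huv)]; exact ⟨hau, huv⟩) (hmin hu)

section LaplaceExponent

/-- The Laplace exponent `q ↦ ∫_{(0,∞)} (1 - e^{-qx}) μ(dx)` of a measure `μ` on `(0,∞)`; any mass
of `μ` on `(-∞,0]` is ignored. -/
def laplaceExponent (μ : Measure ℝ) (q : ℝ) : ℝ :=
  ∫ x in Ioi (0 : ℝ), (1 - Real.exp (-(q * x))) ∂μ

variable {μ : Measure ℝ}

theorem abs_one_sub_exp_neg_le_one {y : ℝ} (hy : 0 ≤ y) : |1 - Real.exp (-y)| ≤ 1 := by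
  rw [abs_of_nonneg (sub_nonneg.2 (Real.exp_le_one_iff.2 (neg_nonpos.2 hy)))]
  exact sub_le_self 1 (Real.exp_pos _).le

theorem laplaceExponent_zero : laplaceExponent μ 0 = 0 := by simp [laplaceExponent]

variable [IsFiniteMeasure μ]

theorem integrableOn_one_sub_exp_neg_mul {q : ℝ} (hq : 0 ≤ q) :
    IntegrableOn (fun x => 1 - Real.exp (-(q * x))) (Ioi 0) μ := by
  refine Integrable.of_bound (by fun_prop) 1 ?_
  filter_upwards [ae_restrict_mem measurableSet_Ioi] with x hx
  exact abs_one_sub_exp_neg_le_one (mul_nonneg hq (mem_Ioi.1 hx).le)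

theorem concaveOn_laplaceExponent : ConcaveOn ℝ (Ici 0) (laplaceExponent μ) := by
  have hconvex (x : ℝ) : ConvexOn ℝ (Ici 0) fun q : ℝ => -(1 - Real.exp (-(q * x))) := by
    simp only [neg_sub]
    exact ((convexOn_exp_neg_mul x).sub (concaveOn_const 1 convex_univ)).subset
      (subset_univ _) (convex_Ici 0)
  have hneg := convexOn_integral (μ := μ.restrict (Ioi 0)) (convex_Ici 0)
    (ae_of_all _ hconvex) fun q hq => (integrableOn_one_sub_exp_neg_mul hq).neg
  simp only [integral_neg] at hneg
  exact neg_convexOn_iff.1 hneg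

theorem strictMonoOn_laplaceExponent (hμ : μ (Ioi 0) ≠ 0) :
    StrictMonoOn (laplaceExponent μ) (Ici 0) := by
  intro p hp q hq hpq
  refine setIntegral_lt_setIntegral measurableSet_Ioi hμ (integrableOn_one_sub_exp_neg_mul hp)
    (integrableOn_one_sub_exp_neg_mul hq) fun x hx => ?_
  exact sub_lt_sub_left
    (Real.exp_lt_exp.2 (neg_lt_neg (mul_lt_mul_of_pos_right hpq hx))) 1

theorem laplaceExponent_pos (hμ : μ (Ioi 0) ≠ 0) {q : ℝ} (hq : 0 < q) :
    0 < laplaceExponent μ q :=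
  laplaceExponent_zero (μ := μ) ▸ strictMonoOn_laplaceExponent hμ self_mem_Ici hq.le hq

theorem laplaceExponent_lt_measureReal (hμ : μ (Ioi 0) ≠ 0) {q : ℝ} (hq : 0 ≤ q) :
    laplaceExponent μ q < μ.real (Ioi 0) := by
  have h := setIntegral_lt_setIntegral measurableSet_Ioi hμ (integrableOn_one_sub_exp_neg_mul hq)
    (integrable_const (1 : ℝ)) fun x _ => sub_lt_self 1 (Real.exp_pos _)
  simpa [laplaceExponent] using h

end LaplaceExponent

section RegularVariation

/-- `f` is regularly varying at `0` with index `ρ`. -/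
def RegularlyVaryingAtZero (f : ℝ → ℝ) (ρ : ℝ) : Prop :=
  ∀ x : ℝ, 0 < x → Tendsto (fun t => f (t * x) / f t) (𝓝[>] 0) (𝓝 (x ^ ρ))

theorem RegularlyVaryingAtZero.pos_of_monotoneOn {f : ℝ → ℝ} {ρ : ℝ}
    (hf : RegularlyVaryingAtZero f ρ) (hmono : MonotoneOn f (Ioi 0))
    (hnonneg : ∀ u, 0 < u → 0 ≤ f u) {u : ℝ} (hu : 0 < u) : 0 < f u := by
  refine (hnonneg u hu).lt_of_ne' fun hfu => ?_
  have hone : Tendsto (fun t => f (t * 1) / f t) (𝓝[>] 0) (𝓝 1) := by simpa using hf 1 one_pos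
  have hzero : Tendsto (fun t => f (t * 1) / f t) (𝓝[>] 0) (𝓝 0) := by
    refine tendsto_const_nhds.congr' ?_
    filter_upwards [Ioc_mem_nhdsGT hu] with t ht
    have hft : f t = 0 := ((hmono ht.1 hu ht.2).trans_eq hfu).antisymm (hnonneg t ht.1)
    rw [hft, div_zero]
  exact zero_ne_one (tendsto_nhds_unique hzero hone)

end RegularVariation

section BranchingMechanism

/-- The Laplace exponent `u ↦ ∫_{(0,∞)} (e^{-ux} - 1 + ux) π(dx)` of a spectrally positive jump
measure `π` with full compensation of the jumps: the jump part of a critical branching mechanism.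
Any mass of `π` on `(-∞,0]` is ignored. -/
def compensatedLaplaceExponent (π : Measure ℝ) (u : ℝ) : ℝ :=
  ∫ x in Ioi (0 : ℝ), (Real.exp (-(u * x)) - 1 + u * x) ∂π

/-- `Ψ` is, on `(0,∞)`, the critical branching mechanism with quadratic coefficient `β` and Lévy
measure `π`, of which only the restriction to `(0,∞)` matters. -/
structure IsCriticalBranchingMechanism (Ψ : ℝ → ℝ) (β : ℝ) (π : Measure ℝ) : Prop where
  coeff_nonneg : 0 ≤ β
  lintegral_min_lt_top : ∫⁻ x in Ioi (0 : ℝ), ENNReal.ofReal (min x (x ^ 2)) ∂π < ⊤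
  eq_of_pos : ∀ u : ℝ, 0 < u → Ψ u = β * u ^ 2 + compensatedLaplaceExponent π u

theorem exp_neg_sub_one_add_nonneg (y : ℝ) : 0 ≤ Real.exp (-y) - 1 + y := by
  linarith [Real.one_sub_le_exp_neg y]

theorem exp_neg_sub_one_add_le_min {y : ℝ} (hy : 0 ≤ y) :
    Real.exp (-y) - 1 + y ≤ min y (y ^ 2) := by
  have hexp : Real.exp (-y) * (y + 1) ≤ 1 := by
    calc Real.exp (-y) * (y + 1) ≤ Real.exp (-y) * Real.exp y := by
          gcongr
          exact Real.add_one_le_exp y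
      _ = 1 := by rw [← Real.exp_add, neg_add_cancel, Real.exp_zero]
  refine le_min (by linarith [Real.exp_le_one_iff.2 (neg_nonpos.2 hy)]) ?_
  nlinarith [mul_nonneg hy (exp_neg_sub_one_add_nonneg y)]

variable {Ψ : ℝ → ℝ} {β : ℝ} {π : Measure ℝ}

theorem integrableOn_exp_neg_mul_sub_one_add
    (hπ : ∫⁻ x in Ioi (0 : ℝ), ENNReal.ofReal (min x (x ^ 2)) ∂π < ⊤) {u : ℝ} (hu : 0 ≤ u) :
    IntegrableOn (fun x => Real.exp (-(u * x)) - 1 + u * x) (Ioi 0) π := by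
  have hmin : IntegrableOn (fun x : ℝ => min x (x ^ 2)) (Ioi 0) π := by
    refine ⟨by fun_prop, (hasFiniteIntegral_iff_ofReal ?_).2 hπ⟩
    filter_upwards [ae_restrict_mem measurableSet_Ioi] with x hx
    exact le_min (mem_Ioi.1 hx).le (sq_nonneg x)
  refine (hmin.const_mul (max u (u ^ 2))).mono' (by fun_prop) ?_
  filter_upwards [ae_restrict_mem measurableSet_Ioi] with x hx
  have hx0 : 0 ≤ x := (mem_Ioi.1 hx).le
  rw [Real.norm_of_nonneg (exp_neg_sub_one_add_nonneg _)]
  calc Real.exp (-(u * x)) - 1 + u * x ≤ min (u * x) ((u * x) ^ 2) :=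
        exp_neg_sub_one_add_le_min (mul_nonneg hu hx0)
    _ ≤ max u (u ^ 2) * min x (x ^ 2) := by
      rw [mul_pow, mul_min_of_nonneg _ _ (hu.trans (le_max_left _ _))]
      gcongr
      exacts [le_max_left _ _, le_max_right _ _]

theorem compensatedLaplaceExponent_zero : compensatedLaplaceExponent π 0 = 0 := by
  simp [compensatedLaplaceExponent]

theorem compensatedLaplaceExponent_nonneg (u : ℝ) : 0 ≤ compensatedLaplaceExponent π u :=
  integral_nonneg fun x => exp_neg_sub_one_add_nonneg (u * x)

theorem convexOn_compensatedLaplaceExponent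
    (hπ : ∫⁻ x in Ioi (0 : ℝ), ENNReal.ofReal (min x (x ^ 2)) ∂π < ⊤) :
    ConvexOn ℝ (Ici 0) (compensatedLaplaceExponent π) := by
  refine convexOn_integral (convex_Ici 0) (ae_of_all _ fun x => ?_) fun u hu =>
    integrableOn_exp_neg_mul_sub_one_add hπ hu
  exact (((convexOn_exp_neg_mul x).sub (concaveOn_const 1 convex_univ)).add
    ((LinearMap.mulRight ℝ x).convexOn convex_univ)).subset (subset_univ _) (convex_Ici 0)

theorem monotoneOn_compensatedLaplaceExponent
    (hπ : ∫⁻ x in Ioi (0 : ℝ), ENNReal.ofReal (min x (x ^ 2)) ∂π < ⊤) :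
    MonotoneOn (compensatedLaplaceExponent π) (Ici 0) := by
  refine monotoneOn_Ici_of_convexOn_of_isMinOn (convexOn_compensatedLaplaceExponent hπ) ?_
  exact fun u _ => compensatedLaplaceExponent_zero.trans_le (compensatedLaplaceExponent_nonneg u)

namespace IsCriticalBranchingMechanism

theorem nonneg (h : IsCriticalBranchingMechanism Ψ β π) (u : ℝ) (hu : 0 < u) : 0 ≤ Ψ u := by
  rw [h.eq_of_pos u hu]
  exact add_nonneg (mul_nonneg h.coeff_nonneg (sq_nonneg u))
    (compensatedLaplaceExponent_nonneg u)

theorem monotoneOn (h : IsCriticalBranchingMechanism Ψ β π) : MonotoneOn Ψ (Ioi 0) := by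
  intro u hu v hv huv
  rw [h.eq_of_pos u hu, h.eq_of_pos v hv]
  exact add_le_add
    (mul_le_mul_of_nonneg_left (pow_le_pow_left₀ (mem_Ioi.1 hu).le huv 2) h.coeff_nonneg)
    (monotoneOn_compensatedLaplaceExponent h.lintegral_min_lt_top
      (Ioi_subset_Ici_self hu) (Ioi_subset_Ici_self hv) huv)

theorem continuousOn (h : IsCriticalBranchingMechanism Ψ β π) : ContinuousOn Ψ (Ioi 0) := by
  refine ContinuousOn.congr (.add (by fun_prop) ?_) h.eq_of_pos
  simpa only [interior_Ici] using
    (convexOn_compensatedLaplaceExponent h.lintegral_min_lt_top).continuousOn_interior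

end IsCriticalBranchingMechanism

end BranchingMechanism

section Asymptotics

variable {E : Type*} [NormedAddCommGroup E] [NormedSpace ℝ E] {f f' : ℝ → E}

theorem isLittleO_id_of_tendsto_hasDerivAt_zero (hf : ∀ᶠ t in atTop, HasDerivAt f (f' t) t)
    (hf' : Tendsto f' atTop (𝓝 0)) : f =o[atTop] (id : ℝ → ℝ) := by
  refine Asymptotics.IsLittleO.of_bound fun ε hε => ?_
  have hsmall : ∀ᶠ t in atTop, ‖f' t‖ ≤ ε / 2 :=
    hf'.norm.eventually_le_const (by simpa using half_pos hε)
  obtain ⟨T, hT⟩ := eventually_atTop.1 ((hf.and hsmall).and (eventually_ge_atTop 0))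
  have hT0 : 0 ≤ T := (hT T le_rfl).2
  have hfT : ∀ᶠ t in atTop, ‖f T‖ ≤ ε / 2 * ‖t‖ :=
    (Asymptotics.isLittleO_const_id_atTop (f T)).bound (half_pos hε)
  filter_upwards [hfT, eventually_ge_atTop T] with t htT hTt
  have hincr : ‖f t - f T‖ ≤ ε / 2 * ‖t - T‖ :=
    (convex_Ici T).norm_image_sub_le_of_norm_hasDerivWithin_le
      (fun s hs => (hT s hs).1.1.hasDerivWithinAt) (fun s hs => (hT s hs).1.2) self_mem_Ici hTt
  calc ‖f t‖ ≤ ‖f t - f T‖ + ‖f T‖ := norm_le_norm_sub_add _ _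
    _ ≤ ε / 2 * ‖t‖ + ε / 2 * ‖t‖ := by
      refine add_le_add (hincr.trans ?_) htT
      rw [Real.norm_of_nonneg (sub_nonneg.2 hTt), Real.norm_of_nonneg (hT0.trans hTt)]
      gcongr
      exact sub_le_self t hT0
    _ = ε * ‖id t‖ := by rw [id]; ring

theorem tendsto_inv_smul_of_tendsto_hasDerivAt {L : E} (hf : ∀ᶠ t in atTop, HasDerivAt f (f' t) t)
    (hf' : Tendsto f' atTop (𝓝 L)) : Tendsto (fun t => t⁻¹ • f t) atTop (𝓝 L) := by
  have hderiv : ∀ᶠ t in atTop, HasDerivAt (fun t => f t - t • L) (f' t - L) t := by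
    filter_upwards [hf] with t ht
    simpa only [id, one_smul] using ht.fun_sub ((hasDerivAt_id t).smul_const L)
  have hzero : Tendsto (fun t => t⁻¹ • (f t - t • L)) atTop (𝓝 0) :=
    (isLittleO_id_of_tendsto_hasDerivAt_zero hderiv
      (by simpa using hf'.sub_const L)).tendsto_inv_smul_nhds_zero
  rw [← zero_add L]
  refine (hzero.add_const L).congr' ?_
  filter_upwards [eventually_ne_atTop 0] with t ht
  rw [smul_sub, inv_smul_smul₀ ht, sub_add_cancel]

end Asymptotics

section DescentTime

/-- The time a solution of `y' = -Ψ(y)` takes to go from `1` down to `u`, which is negative for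
`1 < u`. It is the coordinate in which the flow of this equation is the translation of time. -/
def descentTime (Ψ : ℝ → ℝ) (u : ℝ) : ℝ := ∫ v in u..1, (Ψ v)⁻¹

variable {Ψ : ℝ → ℝ}

theorem hasDerivAt_descentTime (hΨc : ContinuousOn Ψ (Ioi 0)) (hΨpos : ∀ u, 0 < u → 0 < Ψ u)
    {u : ℝ} (hu : 0 < u) : HasDerivAt (descentTime Ψ) (-(Ψ u)⁻¹) u := by
  have hinv : ContinuousOn (fun v => (Ψ v)⁻¹) (Ioi 0) := hΨc.inv₀ fun v hv => (hΨpos v hv).ne'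
  have hsub : uIcc u 1 ⊆ Ioi 0 := (convex_Ioi 0).ordConnected.uIcc_subset hu (mem_Ioi.2 one_pos)
  exact intervalIntegral.integral_hasDerivAt_left (hinv.mono hsub).intervalIntegrable
    (hinv.stronglyMeasurableAtFilter isOpen_Ioi u hu) (hinv.continuousAt (Ioi_mem_nhds hu))

theorem antitoneOn_descentTime (hΨc : ContinuousOn Ψ (Ioi 0)) (hΨpos : ∀ u, 0 < u → 0 < Ψ u) :
    AntitoneOn (descentTime Ψ) (Ioi 0) := by
  have hderiv (u : ℝ) (hu : u ∈ Ioi (0 : ℝ)) := hasDerivAt_descentTime hΨc hΨpos hu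
  refine antitoneOn_of_hasDerivWithinAt_nonpos (convex_Ioi 0)
    (fun u hu => (hderiv u hu).continuousAt.continuousWithinAt)
    (fun u hu => (hderiv u (interior_subset hu)).hasDerivWithinAt) fun u hu => ?_
  exact neg_nonpos.2 (inv_nonneg.2 (hΨpos u (interior_subset hu)).le)

/-- `y` is a positive solution of the autonomous equation `y' = -Ψ(y)` on `(0,∞)`. -/
structure IsPositiveSolution (Ψ y : ℝ → ℝ) : Prop where
  pos : ∀ t, 0 < t → 0 < y t
  hasDerivAt : ∀ t, 0 < t → HasDerivAt y (-Ψ (y t)) t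

variable {y : ℝ → ℝ}

theorem descentTime_solution (hΨc : ContinuousOn Ψ (Ioi 0)) (hΨpos : ∀ u, 0 < u → 0 < Ψ u)
    (hy : IsPositiveSolution Ψ y) {s t : ℝ} (hs : 0 < s) (ht : 0 < t) :
    descentTime Ψ (y t) = descentTime Ψ (y s) + (t - s) := by
  have hderiv (r : ℝ) (hr : r ∈ Ioi (0 : ℝ)) :
      HasDerivAt (fun r => descentTime Ψ (y r) - r) 0 r := by
    have h := ((hasDerivAt_descentTime hΨc hΨpos (hy.pos r hr)).comp r (hy.hasDerivAt r hr)).sub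
      (hasDerivAt_id r)
    rwa [neg_mul_neg, inv_mul_cancel₀ (hΨpos _ (hy.pos r hr)).ne', sub_self] at h
  have hconst := isOpen_Ioi.is_const_of_deriv_eq_zero isPreconnected_Ioi
    (fun r hr => (hderiv r hr).differentiableAt.differentiableWithinAt)
    (fun r hr => (hderiv r hr).deriv) ht hs
  linarith

theorem tendsto_solution_nhdsGT_zero (hΨc : ContinuousOn Ψ (Ioi 0))
    (hΨpos : ∀ u, 0 < u → 0 < Ψ u) (hy : IsPositiveSolution Ψ y) :
    Tendsto y atTop (𝓝[>] 0) := by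
  have hpos : ∀ᶠ t in atTop, 0 < y t := (eventually_gt_atTop 0).mono hy.pos
  refine tendsto_nhdsWithin_iff.2 ⟨tendsto_order.2
    ⟨fun b hb => hpos.mono fun t ht => hb.trans ht, fun ε hε => ?_⟩, hpos⟩
  filter_upwards [eventually_gt_atTop 0,
    eventually_gt_atTop (descentTime Ψ ε - descentTime Ψ (y 1) + 1)] with t ht htε
  refine lt_of_not_ge fun hle => ?_
  have htime := descentTime_solution hΨc hΨpos hy one_pos ht
  linarith [antitoneOn_descentTime hΨc hΨpos hε (hy.pos t ht) hle]

theorem tendsto_descentTime_mul_solution_div {γ : ℝ} (hΨc : ContinuousOn Ψ (Ioi 0))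
    (hΨpos : ∀ u, 0 < u → 0 < Ψ u) (hreg : RegularlyVaryingAtZero Ψ γ)
    (hy : IsPositiveSolution Ψ y) {x : ℝ} (hx : 0 < x) :
    Tendsto (fun t => descentTime Ψ (x * y t) / t) atTop (𝓝 (x ^ (-(γ - 1)))) := by
  have hderiv : ∀ᶠ t in atTop, HasDerivAt (fun t => descentTime Ψ (x * y t))
      (x * (Ψ (y t * x) / Ψ (y t))⁻¹) t := by
    filter_upwards [eventually_gt_atTop 0] with t ht
    refine ((hasDerivAt_descentTime hΨc hΨpos (mul_pos hx (hy.pos t ht))).comp t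
      ((hy.hasDerivAt t ht).const_mul x)).congr_deriv ?_
    rw [mul_comm (y t) x, inv_div]
    ring
  have hratio : Tendsto (fun t => x * (Ψ (y t * x) / Ψ (y t))⁻¹) atTop
      (𝓝 (x * (x ^ γ)⁻¹)) :=
    (((hreg x hx).comp (tendsto_solution_nhdsGT_zero hΨc hΨpos hy)).inv₀
      (Real.rpow_pos_of_pos hx γ).ne').const_mul x
  have hpow : x * (x ^ γ)⁻¹ = x ^ (-(γ - 1)) := by
    rw [neg_sub, Real.rpow_sub hx, Real.rpow_one, div_eq_mul_inv]
  simpa only [hpow, smul_eq_mul, inv_mul_eq_div] using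
    tendsto_inv_smul_of_tendsto_hasDerivAt hderiv hratio

theorem tendsto_descentTime_div_of_tendsto_div {γ x : ℝ} {z : ℝ → ℝ}
    (hΨc : ContinuousOn Ψ (Ioi 0)) (hΨpos : ∀ u, 0 < u → 0 < Ψ u)
    (hreg : RegularlyVaryingAtZero Ψ γ) (hy : IsPositiveSolution Ψ y) (hx : 0 < x)
    (hz : Tendsto (fun t => z t / y t) atTop (𝓝 x)) :
    Tendsto (fun t => descentTime Ψ (z t) / t) atTop (𝓝 (x ^ (-(γ - 1)))) := by
  have hanti : ∀ᶠ t in atTop, AntitoneOn (fun x => descentTime Ψ (x * y t) / t) (Ioi 0) := by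
    filter_upwards [eventually_gt_atTop 0] with t ht u hu v hv huv
    have hyt := hy.pos t ht
    exact div_le_div_of_nonneg_right (antitoneOn_descentTime hΨc hΨpos (mul_pos hu hyt)
      (mul_pos hv hyt) (mul_le_mul_of_nonneg_right huv hyt.le)) ht.le
  refine (tendsto_apply_of_antitoneOn (Ioi_mem_nhds hx) hanti
    (fun x hx => tendsto_descentTime_mul_solution_div hΨc hΨpos hreg hy hx)
    (Real.continuousAt_rpow_const _ _ (Or.inl hx.ne')) hz).congr' ?_
  filter_upwards [eventually_gt_atTop 0] with t ht
  rw [div_mul_cancel₀ _ (hy.pos t ht).ne']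

theorem tendsto_descentTime_initial_div {ι : Type*} {γ x : ℝ} {φ : ι → ℝ → ℝ} {i : ℝ → ι}
    {s : Set ι} (hΨc : ContinuousOn Ψ (Ioi 0)) (hΨpos : ∀ u, 0 < u → 0 < Ψ u)
    (hreg : RegularlyVaryingAtZero Ψ γ) (hy : IsPositiveSolution Ψ y)
    (hφ : ∀ j ∈ s, IsPositiveSolution Ψ (φ j)) (hi : ∀ᶠ t in atTop, i t ∈ s) (hx : 0 < x)
    (hlim : Tendsto (fun t => φ (i t) t / y t) atTop (𝓝 x)) :
    Tendsto (fun t => (descentTime Ψ (φ (i t) 1) - 1) / t) atTop (𝓝 (x ^ (-(γ - 1)) - 1)) := by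
  refine ((tendsto_descentTime_div_of_tendsto_div hΨc hΨpos hreg hy hx hlim).sub_const
    1).congr' ?_
  filter_upwards [hi, eventually_gt_atTop 0] with t his ht
  rw [descentTime_solution hΨc hΨpos (hφ _ his) one_pos ht]
  field_simp
  ring

end DescentTime

theorem scaling_limit_is_mittag_leffler_general {Ψ : ℝ → ℝ} {γ : ℝ}
    (hΨc : ContinuousOn Ψ (Ioi 0)) (hΨpos : ∀ u, 0 < u → 0 < Ψ u) (hγ : 1 < γ)
    (hreg : RegularlyVaryingAtZero Ψ γ) {ν : ℝ → Measure ℝ}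
    (hfin : ∀ t, 0 < t → IsFiniteMeasure (ν t)) (hnz : ∀ t, 0 < t → ν t (Ioi 0) ≠ 0)
    (hode : ∀ q, 0 < q → ∀ t, 0 < t →
      HasDerivAt (fun u => laplaceExponent (ν u) q) (-Ψ (laplaceExponent (ν t) q)) t)
    (hodeInf : ∀ t, 0 < t →
      HasDerivAt (fun u => (ν u).real (Ioi 0)) (-Ψ ((ν t).real (Ioi 0))) t)
    {a lam : ℝ → ℝ} (hlam : ∀ᶠ t in atTop, 0 < lam t)
    {νhat : Measure ℝ} [IsFiniteMeasure νhat] (hνhat : νhat (Ioi 0) ≠ 0)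
    (hmass : Tendsto (fun t => a t * (ν t).real (Ioi 0)) atTop (𝓝 (νhat.real (Ioi 0))))
    (hlaplace : ∀ q, 0 < q → Tendsto (fun t => a t * laplaceExponent (ν t) (q * lam t)) atTop
      (𝓝 (laplaceExponent νhat q))) :
    ∃ ρ : ℝ, 0 < ρ ∧ ρ ≤ 1 ∧ ∃ c : ℝ, 0 < c ∧ ∀ q, 0 < q →
      laplaceExponent νhat q
        = νhat.real (Ioi 0) * (1 + c * q ^ (-(ρ * (γ - 1)))) ^ (-(1 / (γ - 1))) := by
  have hφ (q : ℝ) (hq : 0 < q) : IsPositiveSolution Ψ fun t => laplaceExponent (ν t) q := by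
    refine ⟨fun t ht => ?_, hode q hq⟩
    have := hfin t ht
    exact laplaceExponent_pos (hnz t ht) hq
  have hM : IsPositiveSolution Ψ fun t => (ν t).real (Ioi 0) := by
    refine ⟨fun t ht => ?_, hodeInf⟩
    have := hfin t ht
    exact ENNReal.toReal_pos (hnz t ht) (measure_ne_top _ _)
  have hm : 0 < νhat.real (Ioi 0) := ENNReal.toReal_pos hνhat (measure_ne_top _ _)
  have hXpos (q : ℝ) (hq : 0 < q) : 0 < laplaceExponent νhat q / νhat.real (Ioi 0) :=
    div_pos (laplaceExponent_pos hνhat hq) hm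
  have hratio (q : ℝ) (hq : 0 < q) :
      Tendsto (fun t => laplaceExponent (ν t) (q * lam t) / (ν t).real (Ioi 0)) atTop
        (𝓝 (laplaceExponent νhat q / νhat.real (Ioi 0))) := by
    refine ((hlaplace q hq).div hmass hm.ne').congr' ?_
    filter_upwards [hmass.eventually_ne hm.ne'] with t ht
    exact mul_div_mul_left _ _ (left_ne_zero_of_mul ht)
  have hlim (q : ℝ) (hq : 0 < q) :=
    tendsto_descentTime_initial_div hΨc hΨpos hreg hM hφ
      (hlam.mono fun t => mul_pos hq) (hXpos q hq) (hratio q hq)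
  have := hfin 1 one_pos
  have hC : AntitoneOn (fun q => descentTime Ψ (laplaceExponent (ν 1) q) - 1) (Ioi 0) :=
    fun p hp q hq hpq => sub_le_sub_right (antitoneOn_descentTime hΨc hΨpos
      ((hφ p hp).pos 1 one_pos) ((hφ q hq).pos 1 one_pos) ((strictMonoOn_laplaceExponent
        (hnz 1 one_pos)).monotoneOn (mem_Ioi.1 hp).le (mem_Ioi.1 hq).le hpq)) 1
  have hconcave : ConcaveOn ℝ (Ici 0) fun q => laplaceExponent νhat q / νhat.real (Ioi 0) := by
    simpa only [smul_eq_mul, inv_mul_eq_div] using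
      concaveOn_laplaceExponent.smul (inv_nonneg.2 hm.le)
  obtain ⟨ρ, hρ, hρ1, c, hc, hX⟩ := exists_eq_one_add_mul_rpow_of_tendsto_scaling
    (sub_pos.2 hγ) hconcave (by rw [laplaceExponent_zero, zero_div])
    (fun p hp q hq hpq => div_lt_div_of_pos_right (strictMonoOn_laplaceExponent hνhat hp hq hpq) hm)
    (fun q hq => (div_lt_one hm).2 (laplaceExponent_lt_measureReal hνhat hq.le)) hC hlam hlim
  exact ⟨ρ, hρ, hρ1, c, hc, fun q hq => by rw [← hX q hq, mul_div_cancel₀ _ hm.ne']⟩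

/-- if `Ψ` is a critical branching mechanism, regularly varying at
`0` with index `γ ∈ (1,2]`, and the Laplace exponents of `(ν_t)` solve
`∂_t φ = -Ψ(φ)` (including at `q = ∞`), and the rescaled measures
`α(t) ν_t(λ(t)⁻¹ dx)` converge weakly to a nonzero finite measure `ν̂`, then
`ν̂` has a generalized Mittag-Leffler Laplace exponent:
`∫ (1-e^{-qx}) ν̂(dx) = ν̂((0,∞)) (1 + c q^{-ρ(γ-1)})^{-1/(γ-1)}` for some
`ρ ∈ (0,1]`, `c > 0`. -/
theorem scaling_limit_is_mittag_leffler
    (Ψ : ℝ → ℝ) (β : ℝ) (π : Measure ℝ)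
    (hβ : 0 ≤ β)
    (hπfin : ∫⁻ x in Ioi (0:ℝ), ENNReal.ofReal (min x (x ^ 2)) ∂π < ⊤)
    (hΨ : ∀ u : ℝ, 0 < u →
      Ψ u = β * u ^ 2 + ∫ x in Ioi (0:ℝ), (Real.exp (-(u * x)) - 1 + u * x) ∂π)
    (γ : ℝ) (hγ : 1 < γ ∧ γ ≤ 2)
    (hreg : ∀ x : ℝ, 0 < x →
      Tendsto (fun t => Ψ (t * x) / Ψ t) (nhdsWithin 0 (Ioi 0)) (nhds (x ^ γ)))
    (ν : ℝ → Measure ℝ)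
    (hfin : ∀ t : ℝ, 0 < t → IsFiniteMeasure (ν t))
    (hnz : ∀ t : ℝ, 0 < t → ν t (Ioi 0) ≠ 0)
    (hconc : ∀ t : ℝ, 0 < t → ν t (Iic 0) = 0)
    (hode : ∀ q : ℝ, 0 < q → ∀ t : ℝ, 0 < t →
      HasDerivAt (fun u => ∫ x in Ioi (0:ℝ), (1 - Real.exp (-(q * x))) ∂(ν u))
        (-Ψ (∫ x in Ioi (0:ℝ), (1 - Real.exp (-(q * x))) ∂(ν t))) t)
    (hodeInf : ∀ t : ℝ, 0 < t →
      HasDerivAt (fun u => ((ν u) (Ioi 0)).toReal) (-Ψ (((ν t) (Ioi 0)).toReal)) t)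
    (a lam : ℝ → ℝ) (ha : ∀ t : ℝ, 0 < t → 0 < a t) (hlam : ∀ t : ℝ, 0 < t → 0 < lam t)
    (νhat : Measure ℝ) (hνhatfin : IsFiniteMeasure νhat)
    (hνhatnz : νhat (Ioi 0) ≠ 0) (hνhatc : νhat (Iic 0) = 0)
    (hlim : ∀ f : ℝ → ℝ, ContinuousOn f (Ioi 0) →
      (∃ M : ℝ, ∀ x ∈ Ioi (0:ℝ), |f x| ≤ M) →
      Tendsto (fun t => a t * ∫ x in Ioi (0:ℝ), f (lam t * x) ∂(ν t)) atTop
        (nhds (∫ x in Ioi (0:ℝ), f x ∂νhat))) :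
    ∃ ρ : ℝ, 0 < ρ ∧ ρ ≤ 1 ∧ ∃ c : ℝ, 0 < c ∧
      ∀ q : ℝ, 0 < q →
        ∫ x in Ioi (0:ℝ), (1 - Real.exp (-(q * x))) ∂νhat
          = (νhat (Ioi 0)).toReal *
              (1 + c * q ^ (-(ρ * (γ - 1)))) ^ (-(1 / (γ - 1))) := by
  have hB : IsCriticalBranchingMechanism Ψ β π := ⟨hβ, hπfin, hΨ⟩
  have hΨpos (u : ℝ) (hu : 0 < u) : 0 < Ψ u :=
    RegularlyVaryingAtZero.pos_of_monotoneOn hreg hB.monotoneOn hB.nonneg hu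
  refine scaling_limit_is_mittag_leffler_general (a := a) hB.continuousOn hΨpos hγ.1 hreg hfin hnz
    hode hodeInf ((eventually_gt_atTop 0).mono hlam) hνhatnz ?_ fun q hq => ?_
  · simpa using hlim (fun _ => 1) continuousOn_const ⟨1, by simp⟩
  · have hbound : ∀ x ∈ Ioi (0 : ℝ), |1 - Real.exp (-(q * x))| ≤ 1 := fun x hx =>
      abs_one_sub_exp_neg_le_one (mul_pos hq hx).le
    simpa only [laplaceExponent, mul_assoc] using
      hlim (fun x => 1 - Real.exp (-(q * x))) (by fun_prop) ⟨1, hbound⟩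
end
end
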